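/- arXiv:2306.06913 — 2 statements merged into one kernel-verified Lean document; each statement's English description precedes it below -/
import Mathlib

section
/- (Exact controllability.) Let A be a complex N×N matrix (N ≥ 1). The minimum, over all m ≥ 1 and all complex N×m matrices B for which the controllability matrix [B, AB, A²B, …, A^{N−1}B] has rank N, of the rank of B equals the maximum geometric multiplicity of the eigenvalues of A, i.e. equals max over eigenvalues λ of A of dim ker(A − λI). In particular this minimum is at least 1. -/
/-- The Kalman controllability matrix `[B, AB, A²B, …, A^{N−1}B]` of the pair `(A, B)`,
with columns indexed by `Fin N × Fin m` (the pair `(k, j)` indexing column `j` of `A^k B`). -/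
noncomputable def controllabilityMatrix (N m : ℕ) (A : Matrix (Fin N) (Fin N) ℂ)
    (B : Matrix (Fin N) (Fin m) ℂ) : Matrix (Fin N) (Fin N × Fin m) ℂ :=
  Matrix.of fun (i : Fin N) (p : Fin N × Fin m) => (A ^ (p.1 : ℕ) * B) i p.2

/-- The set of possible ranks of input matrices `B` (over all `m ≥ 1`) making the pair
`(A, B)` controllable in the Kalman sense. Its infimum is the minimum number of driver
nodes `N_D`. -/
def driverRanks (N : ℕ) (A : Matrix (Fin N) (Fin N) ℂ) : Set ℕ :=
  {r : ℕ | ∃ m : ℕ, 1 ≤ m ∧ ∃ B : Matrix (Fin N) (Fin m) ℂ,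
    (controllabilityMatrix N m A B).rank = N ∧ B.rank = r}

open Module in
lemma ec_common {V : Type*} [AddCommGroup V] [Module ℂ V] [FiniteDimensional ℂ V] (d : ℕ) :
    ∀ s : Finset (Submodule ℂ V), (∀ p ∈ s, finrank ℂ V ≤ finrank ℂ p + d) →
      ∃ b : Fin d → V, ∀ p ∈ s, p ⊔ Submodule.span ℂ (Set.range b) = ⊤ := by
  classical
  induction d with
  | zero =>
    intro s hs
    refine ⟨Fin.elim0, fun p hp => ?_⟩
    have h := hs p hp
    have : p = ⊤ := Submodule.eq_top_of_finrank_eq (le_antisymm (Submodule.finrank_le p) (by omega))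
    simp [this]
  | succ d ih =>
    intro s hs
    have hne := Subspace.biUnion_ne_univ_of_top_notMem (s := s.erase ⊤) (by simp)
    obtain ⟨v, hv⟩ := (Set.ne_univ_iff_exists_notMem _).1 hne
    simp only [Set.mem_iUnion, not_exists, Finset.mem_erase] at hv
    obtain ⟨b, hb⟩ := ih (s.image fun p => p ⊔ Submodule.span ℂ {v}) (by
      intro q hq
      obtain ⟨p, hp, rfl⟩ := Finset.mem_image.1 hq
      by_cases hpt : p = ⊤
      · have : finrank ℂ (p ⊔ Submodule.span ℂ {v} : Submodule ℂ V) = finrank ℂ V := by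
          rw [hpt, top_sup_eq, finrank_top]
        omega
      · have hvp := hv p ⟨hpt, hp⟩
        have hlt : p < p ⊔ Submodule.span ℂ {v} := by
          refine lt_of_le_of_ne le_sup_left fun h => hvp ?_
          have : v ∈ p ⊔ Submodule.span ℂ {v} :=
            Submodule.mem_sup_right (Submodule.mem_span_singleton_self v)
          rw [← h] at this
          exact this
        have := Submodule.finrank_lt_finrank_of_lt hlt
        have := hs p hp
        omega)
    refine ⟨Fin.cons v b, fun p hp => ?_⟩
    have := hb _ (Finset.mem_image_of_mem _ hp)
    rw [Fin.range_cons, Submodule.span_insert, ← sup_assoc]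
    exact this

lemma ec_rank_iff {N m : ℕ} (A : Matrix (Fin N) (Fin N) ℂ) (B : Matrix (Fin N) (Fin m) ℂ) :
    (controllabilityMatrix N m A B).rank = N ↔
      Submodule.span ℂ (Set.range (controllabilityMatrix N m A B).col) = ⊤ := by
  rw [Matrix.rank_eq_finrank_span_cols]
  constructor
  · intro h
    exact Submodule.eq_top_of_finrank_eq (by simpa using h)
  · intro h
    rw [h]
    simp

lemma ec_col {N m : ℕ} (A : Matrix (Fin N) (Fin N) ℂ) (B : Matrix (Fin N) (Fin m) ℂ)
    (p : Fin N × Fin m) :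
    (controllabilityMatrix N m A B).col p = (A ^ (p.1 : ℕ)).mulVec (B.col p.2) := by
  ext i
  simp [controllabilityMatrix, Matrix.col, Matrix.mul_apply, Matrix.mulVec, dotProduct]

lemma ec_lower {N m : ℕ} (A : Matrix (Fin N) (Fin N) ℂ) (B : Matrix (Fin N) (Fin m) ℂ)
    (h : (controllabilityMatrix N m A B).rank = N) (lam : ℂ) :
    Module.finrank ℂ (LinearMap.ker (Matrix.mulVecLin (A - lam • 1))) ≤ B.rank := by
  rw [ec_rank_iff] at h
  set R := LinearMap.range (Matrix.mulVecLin (A - lam • 1)) with hR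
  set S := Submodule.span ℂ (Set.range B.col) with hS
  have hinv : ∀ w ∈ R ⊔ S, A.mulVec w ∈ R ⊔ S := by
    intro w hw
    have e : A.mulVec w = (A - lam • 1).mulVecLin w + lam • w := by
      simp [Matrix.sub_mulVec, Matrix.smul_mulVec]
    rw [e]
    exact add_mem (Submodule.mem_sup_left (LinearMap.mem_range_self _ _))
      (Submodule.smul_mem _ _ hw)
  have hpow : ∀ (k : ℕ) (j : Fin m), (A ^ k).mulVec (B.col j) ∈ R ⊔ S := by
    intro k j
    induction k with
    | zero =>
      simp only [pow_zero, Matrix.one_mulVec]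
      exact Submodule.mem_sup_right (Submodule.subset_span ⟨j, rfl⟩)
    | succ k ih =>
      rw [pow_succ', ← Matrix.mulVec_mulVec]
      exact hinv _ ih
  have htop : R ⊔ S = ⊤ := by
    rw [eq_top_iff, ← h, Submodule.span_le]
    rintro _ ⟨p, rfl⟩
    rw [ec_col]
    exact hpow _ _
  have h1 := Submodule.finrank_add_le_finrank_add_finrank R S
  rw [htop] at h1
  have h2 := LinearMap.finrank_range_add_finrank_ker (Matrix.mulVecLin (A - lam • 1))
  rw [Matrix.rank_eq_finrank_span_cols, ← hS]
  rw [finrank_top] at h1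
  rw [← hR] at h2
  omega

lemma ec_upper {N m : ℕ} (hN : 1 ≤ N) (A : Matrix (Fin N) (Fin N) ℂ)
    (B : Matrix (Fin N) (Fin m) ℂ)
    (h : ∀ lam : ℂ, LinearMap.range (Matrix.mulVecLin (A - lam • 1)) ⊔
      Submodule.span ℂ (Set.range B.col) = ⊤) :
    (controllabilityMatrix N m A B).rank = N := by
  rw [ec_rank_iff]
  set W := Submodule.span ℂ (Set.range (controllabilityMatrix N m A B).col) with hW
  have hpow : ∀ (k : ℕ) (j : Fin m), (A ^ k).mulVec (B.col j) ∈ W := by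
    intro k j
    have hd : (Polynomial.X ^ k %ₘ A.charpoly).natDegree < N := by
      have := Polynomial.natDegree_modByMonic_lt (Polynomial.X ^ k) A.charpoly_monic
        (fun h1 => by
          have := A.charpoly_natDegree_eq_dim
          rw [h1] at this
          simp at this
          omega)
      simpa [A.charpoly_natDegree_eq_dim] using this
    rw [Matrix.pow_eq_aeval_mod_charpoly, Polynomial.aeval_eq_sum_range' hd, Matrix.sum_mulVec]
    refine Submodule.sum_mem _ fun i hi => ?_
    rw [Matrix.smul_mulVec]
    refine Submodule.smul_mem _ _ (Submodule.subset_span ⟨(⟨i, Finset.mem_range.1 hi⟩, j), ?_⟩)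
    rw [ec_col]
  have hinv : W ≤ W.comap A.mulVecLin := by
    rw [hW, Submodule.span_le, ← hW]
    rintro _ ⟨p, rfl⟩
    rw [ec_col]
    simp only [Submodule.comap_coe, Set.mem_preimage, Matrix.mulVecLin_apply,
      Matrix.mulVec_mulVec, ← pow_succ', SetLike.mem_coe]
    exact hpow _ _
  have hBW : Submodule.span ℂ (Set.range B.col) ≤ W := by
    rw [Submodule.span_le]
    rintro _ ⟨j, rfl⟩
    simpa using hpow 0 j
  by_contra hne
  haveI : Nontrivial ((Fin N → ℂ) ⧸ W) := Submodule.Quotient.nontrivial_iff.2 hne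
  let g : Module.End ℂ ((Fin N → ℂ) ⧸ W) := W.mapQ W A.mulVecLin hinv
  obtain ⟨c, hc⟩ := Module.End.exists_eigenvalue g
  have hsurj : Function.Surjective (g - c • (1 : Module.End ℂ ((Fin N → ℂ) ⧸ W))) := by
    intro x
    obtain ⟨v, rfl⟩ := Submodule.mkQ_surjective W x
    have hv : v ∈ LinearMap.range (Matrix.mulVecLin (A - c • 1)) ⊔
      Submodule.span ℂ (Set.range B.col) := by rw [h c]; trivial
    obtain ⟨_, ⟨u, rfl⟩, w, hw, rfl⟩ := Submodule.mem_sup.1 hv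
    refine ⟨W.mkQ u, ?_⟩
    have hw0 : W.mkQ w = 0 := by simpa using hBW hw
    rw [map_add, hw0]
    simp [g, Matrix.sub_mulVec, Matrix.smul_mulVec]
  have hinj := LinearMap.injective_iff_surjective.2 hsurj
  obtain ⟨x, hx⟩ := hc.exists_hasEigenvector
  apply hx.2
  apply hinj
  simp [hx.apply_eq_smul]

/-- **Exact controllability.** For `N ≥ 1`, the minimum, over all `m ≥ 1` and all `N × m`
matrices `B` for which the controllability matrix `[B, AB, …, A^{N−1}B]` has rank `N`, of
the rank of `B` equals the maximum geometric multiplicity `max_λ dim ker(A − λI)` over the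
eigenvalues `λ` of `A`; in particular it is at least `1`. -/
theorem exact_controllability (N : ℕ) (hN : 1 ≤ N) (A : Matrix (Fin N) (Fin N) ℂ) :
    sInf (driverRanks N A) =
      sSup {d : ℕ | ∃ lam : ℂ, (A - lam • 1).det = 0 ∧
        d = Module.finrank ℂ (LinearMap.ker (Matrix.mulVecLin (A - lam • 1)))} ∧
    1 ≤ sInf (driverRanks N A) := by
  classical
  set D : Set ℕ := {d : ℕ | ∃ lam : ℂ, (A - lam • 1).det = 0 ∧
        d = Module.finrank ℂ (LinearMap.ker (Matrix.mulVecLin (A - lam • 1)))} with hD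
  haveI : Nonempty (Fin N) := ⟨⟨0, hN⟩⟩
  have hdet : ∀ lam : ℂ, (A - lam • 1).det = 0 ↔
      Module.End.HasEigenvalue (A.mulVecLin : Module.End ℂ (Fin N → ℂ)) lam := by
    intro lam
    rw [← Matrix.exists_mulVec_eq_zero_iff]
    constructor
    · rintro ⟨v, hv, h⟩
      refine Module.End.hasEigenvalue_of_hasEigenvector (x := v)
        (Module.End.hasEigenvector_iff.2 ⟨?_, hv⟩)
      rw [Module.End.mem_eigenspace_iff]
      simpa [Matrix.sub_mulVec, Matrix.smul_mulVec, sub_eq_zero] using h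
    · intro h
      obtain ⟨v, hv⟩ := h.exists_hasEigenvector
      refine ⟨v, hv.2, ?_⟩
      have := hv.apply_eq_smul
      simpa [Matrix.sub_mulVec, Matrix.smul_mulVec, sub_eq_zero] using this
  have hbdd : BddAbove D := by
    refine ⟨N, ?_⟩
    rintro d ⟨lam, -, rfl⟩
    exact (Submodule.finrank_le (LinearMap.ker (Matrix.mulVecLin (A - lam • 1)))).trans (by simp)
  obtain ⟨c, hc⟩ := Module.End.exists_eigenvalue (A.mulVecLin : Module.End ℂ (Fin N → ℂ))
  have hpos : 1 ≤ sSup D := by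
    refine le_trans ?_ (le_csSup hbdd ⟨c, (hdet c).2 hc, rfl⟩)
    rw [Nat.one_le_iff_ne_zero, Ne, Submodule.finrank_eq_zero]
    obtain ⟨v, hv, h⟩ := Matrix.exists_mulVec_eq_zero_iff.2 ((hdet c).2 hc)
    intro h0
    have : v ∈ LinearMap.ker (Matrix.mulVecLin (A - c • 1)) := h
    rw [h0] at this
    exact hv this
  have hlow : ∀ r ∈ driverRanks N A, sSup D ≤ r := by
    rintro r ⟨m, -, B, hB, rfl⟩
    refine csSup_le ⟨_, c, (hdet c).2 hc, rfl⟩ ?_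
    rintro d ⟨lam, -, rfl⟩
    exact ec_lower A B hB lam
  have hfin := Module.End.finite_hasEigenvalue (A.mulVecLin : Module.End ℂ (Fin N → ℂ))
  obtain ⟨b, hb⟩ := ec_common (sSup D)
    (hfin.toFinset.image fun lam : ℂ => LinearMap.range (Matrix.mulVecLin (A - lam • 1))) (by
      intro p hp
      obtain ⟨lam, hl, rfl⟩ := Finset.mem_image.1 hp
      have hl' : (A - lam • 1).det = 0 := (hdet lam).2 (by simpa using hl)
      have h1 := le_csSup hbdd (show _ ∈ D from ⟨lam, hl', rfl⟩)
      have h2 := LinearMap.finrank_range_add_finrank_ker (Matrix.mulVecLin (A - lam • 1))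
      omega)
  let B : Matrix (Fin N) (Fin (sSup D)) ℂ := Matrix.of fun i j => b j i
  have hBcol : B.col = b := rfl
  have hctrl : (controllabilityMatrix N _ A B).rank = N := by
    refine ec_upper hN A B fun lam => ?_
    rw [hBcol]
    by_cases hl : (A - lam • 1).det = 0
    · exact hb _ (Finset.mem_image_of_mem _ (by simpa using (hdet lam).1 hl))
    · have : LinearMap.range (Matrix.mulVecLin (A - lam • 1)) = ⊤ := by
        rw [← LinearMap.ker_eq_bot_iff_range_eq_top, LinearMap.ker_eq_bot']
        intro v hv
        by_contra hv0
        exact hl (Matrix.exists_mulVec_eq_zero_iff.1 ⟨v, hv0, hv⟩)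
      rw [this, top_sup_eq]
  have hmem : B.rank ∈ driverRanks N A := ⟨_, hpos, B, hctrl, rfl⟩
  have hle : B.rank ≤ sSup D := by simpa using B.rank_le_width
  have heq : sInf (driverRanks N A) = sSup D :=
    le_antisymm ((Nat.sInf_le hmem).trans hle) (hlow _ (Nat.sInf_mem ⟨_, hmem⟩))
  exact ⟨heq, heq ▸ hpos⟩
end

section
/- Let A be a complex N×N matrix (N ≥ 1) such that 0 is an eigenvalue of A of maximal geometric multiplicity, i.e. for every eigenvalue λ of A, dim ker(A − λI) ≤ N − rank(A). Then the minimum number of driver nodes satisfies N_D = max{N − rank(A), 1}: the minimum, over all m ≥ 1 and all complex N×m matrices B for which the controllability matrix [B, AB, A²B, …, A^{N−1}B] has rank N, of the rank of B equals max{N − rank(A), 1}. -/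
open scoped Matrix

theorem aux_exists_map {V : Type*} [AddCommGroup V] [Module ℂ V] [FiniteDimensional ℂ V]
    (T : Module.End ℂ V) (d : ℕ)
    (h : ∀ μ : ℂ, Module.finrank ℂ (T.eigenspace μ) ≤ d) :
    ∃ F : V →ₗ[ℂ] (Fin d → ℂ), ∀ (μ : ℂ) (v : V), v ∈ T.eigenspace μ → F v = 0 → v = 0 := by
  classical
  have hf : ∀ μ : ℂ, ∃ f : T.eigenspace μ →ₗ[ℂ] (Fin d → ℂ), Function.Injective f := by
    intro μ
    exact finrank_le_iff_exists_linearMap.mp (by simpa using h μ)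
  choose f hf using hf
  have hind := T.eigenspaces_iSupIndep
  have hinj := hind.dfinsupp_lsum_injective
  obtain ⟨g, hg⟩ := LinearMap.exists_leftInverse_of_injective _ (LinearMap.ker_eq_bot.mpr hinj)
  refine ⟨(DFinsupp.lsum ℕ f) ∘ₗ g, ?_⟩
  intro μ v hv h0
  have h1 : g v = DFinsupp.single μ (⟨v, hv⟩ : T.eigenspace μ) := by
    have := LinearMap.congr_fun hg (DFinsupp.single μ (⟨v, hv⟩ : T.eigenspace μ))
    simpa using this
  have h2 : f μ ⟨v, hv⟩ = 0 := by
    simpa [h1] using h0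
  have h3 := hf μ (h2.trans (map_zero (f μ)).symm)
  simpa using congrArg Subtype.val h3

theorem aux_ker_transpose (N : ℕ) (M : Matrix (Fin N) (Fin N) ℂ) :
    Module.finrank ℂ (LinearMap.ker Mᵀ.mulVecLin) = Module.finrank ℂ (LinearMap.ker M.mulVecLin) := by
  have h1 := LinearMap.finrank_range_add_finrank_ker M.mulVecLin
  have h2 := LinearMap.finrank_range_add_finrank_ker Mᵀ.mulVecLin
  have h3 := M.rank_transpose
  unfold Matrix.rank at h3
  omega

theorem aux_lower (N m : ℕ) (A : Matrix (Fin N) (Fin N) ℂ) (B : Matrix (Fin N) (Fin m) ℂ)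
    (h : (controllabilityMatrix N m A B).rank = N) : N - A.rank ≤ B.rank := by
  have hle : LinearMap.range (controllabilityMatrix N m A B).mulVecLin ≤
      LinearMap.range A.mulVecLin ⊔ LinearMap.range B.mulVecLin := by
    rw [Matrix.range_mulVecLin, Submodule.span_le]
    rintro _ ⟨⟨⟨k, hk⟩, j⟩, rfl⟩
    have hc : (controllabilityMatrix N m A B).col (⟨k, hk⟩, j) = (A ^ k * B) *ᵥ Pi.single j 1 := by
      ext i
      simp [controllabilityMatrix]
    rw [hc]
    cases k with
    | zero =>
      apply Submodule.mem_sup_right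
      exact ⟨Pi.single j 1, by simp⟩
    | succ k =>
      apply Submodule.mem_sup_left
      refine ⟨(A ^ k * B) *ᵥ Pi.single j 1, ?_⟩
      rw [Matrix.mulVecLin_apply, Matrix.mulVec_mulVec, ← Matrix.mul_assoc, ← pow_succ']
  have h1 := Submodule.finrank_mono hle
  have h2 := Submodule.finrank_add_le_finrank_add_finrank (LinearMap.range A.mulVecLin) (LinearMap.range B.mulVecLin)
  unfold Matrix.rank at *
  omega

theorem aux_ctrl (N m : ℕ) (A : Matrix (Fin N) (Fin N) ℂ) (B : Matrix (Fin N) (Fin m) ℂ)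
    (h : ∀ (μ : ℂ) (v : Fin N → ℂ), v ∈ Module.End.eigenspace Aᵀ.mulVecLin μ →
      Bᵀ *ᵥ v = 0 → v = 0) :
    (controllabilityMatrix N m A B).rank = N := by
  have hker : LinearMap.ker (controllabilityMatrix N m A B)ᵀ.mulVecLin = ⊥ := by
    by_contra hne
    set K := LinearMap.ker (controllabilityMatrix N m A B)ᵀ.mulVecLin with hK
    have hmem : ∀ w : Fin N → ℂ, w ∈ K ↔ ∀ k < N, w ᵥ* (A ^ k * B) = 0 := by
      intro w
      rw [hK, LinearMap.mem_ker, Matrix.mulVecLin_apply, Matrix.mulVec_transpose]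
      constructor
      · intro hw k hk
        ext j
        exact congrFun hw (⟨k, hk⟩, j)
      · intro hw
        ext ⟨⟨k, hk⟩, j⟩
        exact congrFun (hw k hk) j
    have hall : ∀ w ∈ K, ∀ k, w ᵥ* (A ^ k * B) = 0 := by
      intro w hw k
      rw [hmem] at hw
      have hdeg : ((Polynomial.X ^ k : Polynomial ℂ) %ₘ A.charpoly).natDegree < N ∨ N = 0 := by
        rcases Nat.eq_zero_or_pos N with h0 | h0
        · exact Or.inr h0
        · left
          have hcn : A.charpoly.natDegree = N := by simp
          have := Polynomial.natDegree_modByMonic_lt (Polynomial.X ^ k : Polynomial ℂ)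
            A.charpoly_monic (by intro h1; rw [h1] at hcn; simp at hcn; omega)
          omega
      rcases hdeg with hdeg | h0
      · rw [Matrix.pow_eq_aeval_mod_charpoly, Polynomial.aeval_eq_sum_range' hdeg,
          Matrix.sum_mul, Matrix.vecMul_sum]
        apply Finset.sum_eq_zero
        intro i hi
        rw [Matrix.smul_mul, Matrix.vecMul_smul, hw i (Finset.mem_range.mp hi), smul_zero]
      · subst h0
        ext j
        simp [Matrix.vecMul, dotProduct]
    have hinv : ∀ w ∈ K, Aᵀ.mulVecLin w ∈ K := by
      intro w hw
      rw [hmem]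
      intro k _
      rw [Matrix.mulVecLin_apply, Matrix.mulVec_transpose, Matrix.vecMul_vecMul,
        ← Matrix.mul_assoc, ← pow_succ']
      exact hall w hw _
    have : Nontrivial K := Submodule.nontrivial_iff_ne_bot.mpr hne
    obtain ⟨μ, hμ⟩ := Module.End.exists_eigenvalue (Aᵀ.mulVecLin.restrict hinv)
    obtain ⟨v, hv⟩ := hμ.exists_hasEigenvector
    apply hv.2
    have h1 := hv.apply_eq_smul
    have h2 : (v : Fin N → ℂ) = 0 := by
      apply h μ
      · rw [Module.End.mem_eigenspace_iff]
        exact congrArg Subtype.val h1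
      · have := hall v v.2 0
        rwa [pow_zero, Matrix.one_mul, ← Matrix.mulVec_transpose] at this
    exact Subtype.ext h2
  have h1 := LinearMap.finrank_range_add_finrank_ker (controllabilityMatrix N m A B)ᵀ.mulVecLin
  rw [hker, finrank_bot] at h1
  rw [← Matrix.rank_transpose]
  unfold Matrix.rank
  simpa using h1


/-- If `N ≥ 1` and `0` is an eigenvalue of `A` of maximal geometric multiplicity — i.e.
`dim ker(A − λI) ≤ N − rank A` for every eigenvalue `λ` of `A` — then the minimum number
of driver nodes satisfies `N_D = max {N − rank A, 1}`: the minimum, over all `m ≥ 1` and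
all `N × m` matrices `B` making the Kalman controllability matrix have rank `N`, of the
rank of `B` equals `max (N − rank A) 1`. -/
theorem driver_nodes_eq_corank (N : ℕ) (hN : 1 ≤ N) (A : Matrix (Fin N) (Fin N) ℂ)
    (hmax : ∀ lam : ℂ, (A - lam • 1).det = 0 →
      Module.finrank ℂ (LinearMap.ker (Matrix.mulVecLin (A - lam • 1))) ≤ N - A.rank) :
    sInf (driverRanks N A) = max (N - A.rank) 1 := by
  have hcor : 1 ≤ N - A.rank := by
    have : Nonempty (Fin N) := ⟨⟨0, hN⟩⟩
    obtain ⟨μ, hμ⟩ := Module.End.exists_eigenvalue (A.mulVecLin)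
    obtain ⟨v, hv⟩ := hμ.exists_hasEigenvector
    have h0 : (A - μ • 1) *ᵥ v = 0 := by
      have := hv.apply_eq_smul
      rw [Matrix.mulVecLin_apply] at this
      rw [Matrix.sub_mulVec, this, Matrix.smul_mulVec, Matrix.one_mulVec, sub_self]
    have hdet := Matrix.exists_mulVec_eq_zero_iff.mp ⟨v, hv.2, h0⟩
    refine le_trans ?_ (hmax μ hdet)
    apply Nat.one_le_iff_ne_zero.mpr
    intro h1
    rw [Submodule.finrank_eq_zero] at h1
    have : v ∈ LinearMap.ker (Matrix.mulVecLin (A - μ • 1)) := h0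
    rw [h1] at this
    exact hv.2 (by simpa using this)
  rw [max_eq_left hcor]
  obtain ⟨F, hF⟩ := aux_exists_map Aᵀ.mulVecLin (N - A.rank) (by
    intro μ
    have he : Module.End.eigenspace Aᵀ.mulVecLin μ
        = LinearMap.ker (Matrix.mulVecLin (A - μ • 1)ᵀ) := by
      ext v
      rw [Module.End.mem_eigenspace_iff, LinearMap.mem_ker, Matrix.mulVecLin_apply,
        Matrix.mulVecLin_apply, Matrix.transpose_sub, Matrix.transpose_smul,
        Matrix.transpose_one, Matrix.sub_mulVec, Matrix.smul_mulVec, Matrix.one_mulVec, sub_eq_zero]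
    rw [he, aux_ker_transpose]
    by_cases hdet : (A - μ • 1).det = 0
    · exact hmax μ hdet
    · have : LinearMap.ker (Matrix.mulVecLin (A - μ • 1)) = ⊥ := by
        rw [Submodule.eq_bot_iff]
        intro v hv
        by_contra hne
        exact hdet (Matrix.exists_mulVec_eq_zero_iff.mp ⟨v, hne, hv⟩)
      rw [this, finrank_bot]
      exact Nat.zero_le _)
  have hC := aux_ctrl N (N - A.rank) A (LinearMap.toMatrix' F)ᵀ (by
    intro μ v hv h0
    apply hF μ v hv
    rwa [Matrix.transpose_transpose, LinearMap.toMatrix'_mulVec] at h0)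
  have hmem : N - A.rank ∈ driverRanks N A := by
    refine ⟨N - A.rank, hcor, (LinearMap.toMatrix' F)ᵀ, hC, le_antisymm ?_ (aux_lower _ _ _ _ hC)⟩
    simpa using Matrix.rank_le_width (LinearMap.toMatrix' F)ᵀ
  apply le_antisymm (Nat.sInf_le hmem)
  apply le_csInf ⟨_, hmem⟩
  rintro r ⟨m, _, B, hB, rfl⟩
  exact aux_lower N m A B hB
end
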